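/- arXiv:1304.3918 — 2 statements merged into one kernel-verified Lean document; each statement's English description precedes it below -/
import Mathlib

section
/- Let n ≥ 3, let I, J be integers with 1 ≤ I and I + 2 ≤ J ≤ n, let μ ∈ ℝ and σ > 0, and set u_0(t) = μ − σ·log t (the ξ = 0, i.e. exponential, case of the GPD quantile). Then the function g ↦ ξ̂_{IJ}(u_0(g_1), …, u_0(g_n)) is Lebesgue integrable on the simplex Δ_n and n! · ∫_{Δ_n} ξ̂_{IJ}(u_0(g_1), …, u_0(g_n)) dg = 0. That is, each elemental estimator is unbiased at ξ = 0. -/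
open MeasureTheory Real Set

/-- The open simplex `Δ_n = {g : 0 < g 1 < ⋯ < g n < 1}` in `ℝ^n`. -/
def simplex (n : ℕ) : Set (Fin n → ℝ) :=
  {g | StrictMono g ∧ ∀ i, 0 < g i ∧ g i < 1}

/-- The data tuple `X_i = u(g_i)` (1-based indexing: `sample n u g i = u (g_{i-1})`,
for `1 ≤ i ≤ n`; junk value `0` outside this range). -/
noncomputable def sample (n : ℕ) (u : ℝ → ℝ) (g : Fin n → ℝ) : ℕ → ℝ :=
  fun i => if h : i - 1 < n then u (g ⟨i - 1, h⟩) else 0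

/-- The elemental estimator
`ξ̂_{IJ}(x) = (J−1)·log(x_I − x_{J−1}) − (J−1−I)·log(x_I − x_J) − I·log(x_{I+1} − x_J)`. -/
noncomputable def elemental (I J : ℕ) (x : ℕ → ℝ) : ℝ :=
  ((J : ℝ) - 1) * Real.log (x I - x (J - 1))
    - ((J : ℝ) - 1 - (I : ℝ)) * Real.log (x I - x J)
    - (I : ℝ) * Real.log (x (I + 1) - x J)

/-!
On the simplex, `log (u_0 (g i) - u_0 (g j)) = log σ + h (g i / g j)` for `i < j`, where
`h v = log (-log v)`; the coefficients of the estimator sum to zero, so `log σ` cancels. The first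
`j` uniform order statistics divided by the next one are distributed as the order statistics of a
uniform sample of size `j`, so only expectations of `h` at single order statistics remain. Deleting
a uniformly random one of `n + 1` uniform order statistics leaves `n` of them; the resulting
recurrence between the expectations at sample sizes `n` and `n + 1` has exactly the coefficients of
the elemental estimator.
-/

open ProbabilityTheory
open scoped ENNReal Nat Pointwise

variable {n : ℕ}

lemma measurableSet_simplex (n : ℕ) : MeasurableSet (simplex n) := by
  have h : simplex n = (⋂ i, ⋂ j, ⋂ _ : i < j, {g : Fin n → ℝ | g i < g j}) ∩
      univ.pi fun _ => Ioo 0 1 := by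
    ext g
    simp [simplex, StrictMono]
  rw [h]
  refine .inter (.iInter fun i => .iInter fun j => .iInter fun _ => ?_)
    (.univ_pi fun _ => measurableSet_Ioo)
  exact measurableSet_lt (measurable_pi_apply i) (measurable_pi_apply j)

lemma insertNth_mem_simplex {p : Fin (n + 1)} {t : ℝ} {g : Fin n → ℝ} :
    p.insertNth t g ∈ simplex (n + 1) ↔
      t ∈ Ioo 0 1 ∧ g ∈ simplex n ∧
        (∀ i : Fin n, i.castSucc < p → g i < t) ∧ ∀ i : Fin n, p ≤ i.castSucc → t < g i := by
  simp only [simplex, mem_ofPred_eq, Fin.strictMono_insertNth_iff, p.forall_iff_succAbove,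
    Fin.insertNth_apply_same, Fin.insertNth_apply_succAbove, mem_Ioo]
  tauto

/-- The pairs `(t, g)` for which inserting `t` into the tuple `g` at position `p` yields a point of
the open simplex. As `p` varies, these regions partition `(0, 1) × simplex n` up to a null set. -/
def insertionRegion (p : Fin (n + 1)) : Set (ℝ × (Fin n → ℝ)) :=
  (MeasurableEquiv.piFinSuccAbove (fun _ => ℝ) p).symm ⁻¹' simplex (n + 1)

lemma mem_insertionRegion {p : Fin (n + 1)} {z : ℝ × (Fin n → ℝ)} :
    z ∈ insertionRegion p ↔ p.insertNth z.1 z.2 ∈ simplex (n + 1) :=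
  Iff.rfl

lemma measurableSet_insertionRegion (p : Fin (n + 1)) : MeasurableSet (insertionRegion p) :=
  (MeasurableEquiv.measurable _) (measurableSet_simplex _)

lemma measurePreserving_simplex_insertionRegion (p : Fin (n + 1)) :
    MeasurePreserving (MeasurableEquiv.piFinSuccAbove (fun _ => ℝ) p)
      (volume.restrict (simplex (n + 1))) (volume.restrict (insertionRegion p)) :=
  ((volume_preserving_piFinSuccAbove (fun _ => ℝ) p).symm.restrict_preimage
    (measurableSet_simplex _)).symm

lemma pairwise_disjoint_insertionRegion :
    Pairwise (Function.onFun Disjoint (insertionRegion (n := n))) := by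
  refine (pairwise_disjoint_on _).2 fun p q hpq => disjoint_left.2 fun z hp hq => ?_
  rw [mem_insertionRegion, insertNth_mem_simplex] at hp hq
  obtain ⟨i, rfl⟩ := Fin.exists_castSucc_eq.2 (hpq.trans_le (Fin.le_last q)).ne
  exact lt_asymm (hp.2.2.2 i le_rfl) (hq.2.2.1 i hpq)

lemma exists_insertNth_mem_simplex {t : ℝ} {g : Fin n → ℝ} (ht : t ∈ Ioo 0 1)
    (hg : g ∈ simplex n) (htg : ∀ i, g i ≠ t) :
    ∃ p : Fin (n + 1), p.insertNth t g ∈ simplex (n + 1) := by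
  let p : Fin (n + 1) := (Finset.univ.filter fun i => t < g i).inf Fin.castSucc
  have hp (i : Fin n) : i.castSucc < p ↔ g i < t := by
    rw [Finset.lt_inf_iff (Fin.castSucc_lt_last i)]
    simp only [Finset.mem_filter_univ, Fin.castSucc_lt_castSucc_iff]
    refine ⟨fun h => (htg i).lt_of_le (not_lt.1 fun hi => (h i hi).false), fun hi j hj => ?_⟩
    exact hg.1.lt_iff_lt.1 (hi.trans hj)
  refine ⟨p, insertNth_mem_simplex.2 ⟨ht, hg, fun i => (hp i).1, fun i hi => ?_⟩⟩
  exact (htg i).symm.lt_of_le (not_lt.1 ((hp i).not.1 hi.not_gt))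

lemma ae_forall_apply_ne_fst : ∀ᵐ z : ℝ × (Fin n → ℝ), ∀ i, z.2 i ≠ z.1 := by
  refine ae_all_iff.2 fun i => ?_
  rw [Measure.volume_eq_prod, Measure.ae_prod_iff_ae_ae (by measurability)]
  exact ae_of_all _ fun t => Measure.ae_eval_ne (μ := fun _ : Fin n => (volume : Measure ℝ)) i t

lemma iUnion_insertionRegion_ae_eq :
    (⋃ p, insertionRegion p : Set (ℝ × (Fin n → ℝ))) =ᵐ[volume] Ioo 0 1 ×ˢ simplex n := by
  filter_upwards [ae_forall_apply_ne_fst] with z hz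
  refine propext (Iff.trans mem_iUnion ⟨?_, ?_⟩)
  · rintro ⟨p, hp⟩
    have := insertNth_mem_simplex.1 hp
    exact ⟨this.1, this.2.1⟩
  · rintro ⟨ht, hg⟩
    exact exists_insertNth_mem_simplex ht hg hz

lemma sum_map_removeNth_volume_simplex (n : ℕ) :
    ∑ p : Fin (n + 1), (volume.restrict (simplex (n + 1))).map p.removeNth =
      volume.restrict (simplex n) := by
  have hmap (p : Fin (n + 1)) : (volume.restrict (simplex (n + 1))).map p.removeNth =
      (volume.restrict (insertionRegion p)).map Prod.snd := by
    rw [← (measurePreserving_simplex_insertionRegion p).map_eq,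
      Measure.map_map measurable_snd (MeasurableEquiv.measurable _)]
    rfl
  calc ∑ p : Fin (n + 1), (volume.restrict (simplex (n + 1))).map p.removeNth
      = (volume.restrict (⋃ p : Fin (n + 1), insertionRegion p)).map Prod.snd := by
        simp_rw [hmap]
        rw [Measure.restrict_iUnion pairwise_disjoint_insertionRegion measurableSet_insertionRegion,
          Measure.sum_fintype, Measure.map_finset_sum' (by fun_prop)]
    _ = ((volume.restrict (Ioo (0 : ℝ) 1)).prod (volume.restrict (simplex n))).map Prod.snd := by
        rw [Measure.restrict_congr_set iUnion_insertionRegion_ae_eq, Measure.volume_eq_prod,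
          Measure.prod_restrict]
    _ = volume.restrict (simplex n) := by simp

/-- The joint law of the increasing order statistics of `n` independent uniform variables on
`(0, 1)`: Lebesgue measure on the simplex, normalised by `n!`. -/
noncomputable def orderStatLaw (n : ℕ) : Measure (Fin n → ℝ) :=
  (n ! : ℝ≥0∞) • volume.restrict (simplex n)

lemma integrable_orderStatLaw_iff {E : Type*} [NormedAddCommGroup E] {F : (Fin n → ℝ) → E} :
    Integrable F (orderStatLaw n) ↔ IntegrableOn F (simplex n) :=
  integrable_smul_measure (by simp [Nat.factorial_ne_zero]) (by simp)

lemma integral_orderStatLaw {E : Type*} [NormedAddCommGroup E] [NormedSpace ℝ E]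
    (F : (Fin n → ℝ) → E) :
    ∫ g, F g ∂orderStatLaw n = (n ! : ℝ) • ∫ g in simplex n, F g := by
  simp [orderStatLaw, integral_smul_measure]

lemma ae_orderStatLaw_mem_simplex (n : ℕ) : ∀ᵐ g ∂orderStatLaw n, g ∈ simplex n :=
  Measure.ae_smul_measure (ae_restrict_mem (measurableSet_simplex n)) _

lemma integrable_apply_orderStatLaw {E : Type*} [NormedAddCommGroup E] {f : ℝ → E}
    (hf : IntegrableOn f (Ioo 0 1)) (i : Fin n) :
    Integrable (fun g => f (g i)) (orderStatLaw n) := by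
  have hsub : simplex n ⊆ univ.pi fun _ => Ioo 0 1 := fun g hg i _ => hg.2 i
  refine integrable_orderStatLaw_iff.2 (IntegrableOn.mono_set ?_ hsub)
  rw [IntegrableOn, volume_pi, Measure.restrict_pi_pi]
  exact integrable_comp_eval (μ := fun _ : Fin n => (volume : Measure ℝ).restrict (Ioo 0 1)) hf

lemma sum_map_removeNth_orderStatLaw (n : ℕ) :
    ∑ p : Fin (n + 1), (orderStatLaw (n + 1)).map p.removeNth =
      ((n + 1 : ℕ) : ℝ≥0∞) • orderStatLaw n := by
  simp only [orderStatLaw, Measure.map_smul, ← Finset.smul_sum, sum_map_removeNth_volume_simplex,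
    smul_smul, Nat.factorial_succ, Nat.cast_mul]

lemma integral_orderStatLaw_eq_sum_removeNth {E : Type*} [NormedAddCommGroup E] [NormedSpace ℝ E]
    {F : (Fin n → ℝ) → E} (hF : Integrable F (orderStatLaw n)) :
    ((n : ℝ) + 1) • ∫ g, F g ∂orderStatLaw n =
      ∑ p : Fin (n + 1), ∫ g, F (p.removeNth g) ∂orderStatLaw (n + 1) := by
  have hsum : Integrable F (∑ p : Fin (n + 1), (orderStatLaw (n + 1)).map p.removeNth) := by
    rw [sum_map_removeNth_orderStatLaw]
    exact hF.smul_measure (by simp)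
  have hp := integrable_finsetSum_measure.1 hsum
  calc ((n : ℝ) + 1) • ∫ g, F g ∂orderStatLaw n
      = ∫ g, F g ∂∑ p : Fin (n + 1), (orderStatLaw (n + 1)).map p.removeNth := by
        rw [sum_map_removeNth_orderStatLaw, integral_smul_measure, ENNReal.toReal_natCast,
          Nat.cast_succ]
    _ = ∑ p : Fin (n + 1), ∫ g, F g ∂(orderStatLaw (n + 1)).map p.removeNth :=
        integral_finsetSum_measure hp
    _ = ∑ p : Fin (n + 1), ∫ g, F (p.removeNth g) ∂orderStatLaw (n + 1) :=
        Finset.sum_congr rfl fun p _ => integral_map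
          (measurable_pi_lambda _ fun i => measurable_pi_apply _).aemeasurable
          (hp p (Finset.mem_univ p)).aestronglyMeasurable

lemma sum_comp_succAbove {M : Type*} [AddCommMonoid M] (F : Fin (n + 1) → M) (i : Fin n) :
    ∑ p : Fin (n + 1), F (p.succAbove i) = (n - i : ℕ) • F i.castSucc + (i + 1 : ℕ) • F i.succ := by
  have hF (p : Fin (n + 1)) :
      F (p.succAbove i) = if i.castSucc < p then F i.castSucc else F i.succ := by
    rw [Fin.succAbove, apply_ite F]
  simp_rw [hF]
  rw [Finset.sum_ite, Finset.sum_const, Finset.sum_const]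
  simp [Finset.filter_lt_eq_Ioi, Finset.filter_ge_eq_Iic]

lemma integral_apply_orderStatLaw_recurrence {E : Type*} [NormedAddCommGroup E] [NormedSpace ℝ E]
    {f : ℝ → E} {i : Fin n} (hf : Integrable (fun g => f (g i)) (orderStatLaw n)) :
    ((n : ℝ) + 1) • ∫ g, f (g i) ∂orderStatLaw n =
      ((n : ℝ) - i) • ∫ g, f (g i.castSucc) ∂orderStatLaw (n + 1) +
        ((i : ℝ) + 1) • ∫ g, f (g i.succ) ∂orderStatLaw (n + 1) := by
  rw [integral_orderStatLaw_eq_sum_removeNth hf]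
  refine (sum_comp_succAbove (fun j => ∫ g, f (g j) ∂orderStatLaw (n + 1)) i).trans ?_
  simp only [← Nat.cast_smul_eq_nsmul ℝ, Nat.cast_sub i.is_le', Nat.cast_succ]

/-- The first `n` of `n + 1` coordinates, divided by the last one. On the simplex, where the last
coordinate is nonzero, this turns the order statistics of a sample of size `n + 1` into those of a
sample of size `n`. -/
noncomputable def divLast (g : Fin (n + 1) → ℝ) : Fin n → ℝ :=
  fun i => g i.castSucc / g (Fin.last n)

lemma measurable_divLast : Measurable (divLast (n := n)) :=
  measurable_pi_lambda _ fun _ => (measurable_pi_apply _).div (measurable_pi_apply _)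

lemma divLast_insertNth_last_smul {t : ℝ} (ht : t ≠ 0) (g : Fin n → ℝ) :
    divLast ((Fin.last n).insertNth t (t • g)) = g := by
  ext i
  simp [divLast, ht]

lemma insertNth_last_smul_mem_simplex {t : ℝ} (ht : t ∈ Ioo 0 1) {g : Fin n → ℝ} :
    (Fin.last n).insertNth t (t • g) ∈ simplex (n + 1) ↔ g ∈ simplex n := by
  have h0 := ht.1
  rw [insertNth_mem_simplex]
  simp only [simplex, StrictMono, mem_ofPred_eq, Pi.smul_apply, smul_eq_mul,
    Fin.castSucc_lt_last, (Fin.castSucc_lt_last _).not_ge, mul_lt_mul_iff_right₀ h0,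
    mul_pos_iff_of_pos_left h0, mul_lt_iff_lt_one_right h0]
  have hlt (i : Fin n) (hi : g i < 1) : t * g i < 1 := (mul_lt_of_lt_one_right h0 hi).trans ht.2
  grind

lemma preimage_insertNth_last_simplex_inter {t : ℝ} (ht : t ∈ Ioo 0 1) (s : Set (Fin n → ℝ)) :
    (fun g => (Fin.last n).insertNth t g) ⁻¹' (divLast ⁻¹' s ∩ simplex (n + 1)) =
      t • (s ∩ simplex n) := by
  ext g
  obtain ⟨g, rfl⟩ : ∃ g', t • g' = g := ⟨t⁻¹ • g, smul_inv_smul₀ ht.1.ne' g⟩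
  rw [smul_mem_smul_set_iff₀ ht.1.ne']
  simp only [mem_preimage, mem_inter_iff, divLast_insertNth_last_smul ht.1.ne',
    insertNth_last_smul_mem_simplex ht]

lemma setLIntegral_Ioo_pow (n : ℕ) :
    ∫⁻ t in Ioo (0 : ℝ) 1, ENNReal.ofReal (t ^ n) = ((n + 1 : ℕ) : ℝ≥0∞)⁻¹ := by
  rw [← ofReal_integral_eq_lintegral_ofReal, ← integral_Ioc_eq_integral_Ioo,
    ← intervalIntegral.integral_of_le zero_le_one, integral_pow, ← ENNReal.ofReal_natCast,
    ← ENNReal.ofReal_inv_of_pos (by positivity)]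
  · simp
  · exact ((continuous_pow n).integrableOn_Icc (a := 0) (b := 1)).mono_set Ioo_subset_Icc_self
  · exact (ae_restrict_iff' measurableSet_Ioo).2 (ae_of_all _ fun t ht => pow_nonneg ht.1.le n)

lemma volume_divLast_preimage_inter_simplex {s : Set (Fin n → ℝ)} (hs : MeasurableSet s) :
    volume (divLast ⁻¹' s ∩ simplex (n + 1)) =
      ((n + 1 : ℕ) : ℝ≥0∞)⁻¹ * volume (s ∩ simplex n) := by
  have hmeas : MeasurableSet (divLast ⁻¹' s ∩ simplex (n + 1)) :=
    (measurable_divLast hs).inter (measurableSet_simplex _)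
  let e := (MeasurableEquiv.piFinSuccAbove (fun _ => ℝ) (Fin.last n)).symm
  have hslice (t : ℝ) : volume (Prod.mk t ⁻¹' (e ⁻¹' (divLast ⁻¹' s ∩ simplex (n + 1)))) =
      (Ioo 0 1).indicator (fun t => ENNReal.ofReal (t ^ n) * volume (s ∩ simplex n)) t := by
    by_cases ht : t ∈ Ioo 0 1
    · refine (congrArg volume (preimage_insertNth_last_simplex_inter ht s)).trans ?_
      rw [indicator_of_mem ht, Measure.addHaar_smul_of_nonneg _ ht.1.le, Module.finrank_fin_fun]
    · rw [indicator_of_notMem ht]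
      exact measure_mono_null (fun g hg => ht (insertNth_mem_simplex.1 hg.2).1) measure_empty
  calc volume (divLast ⁻¹' s ∩ simplex (n + 1))
      = volume (e ⁻¹' (divLast ⁻¹' s ∩ simplex (n + 1))) :=
        ((volume_preserving_piFinSuccAbove (fun _ => ℝ) _).symm.measure_preimage
          hmeas.nullMeasurableSet).symm
    _ = ∫⁻ t in Ioo (0 : ℝ) 1, ENNReal.ofReal (t ^ n) * volume (s ∩ simplex n) := by
        rw [Measure.volume_eq_prod, Measure.prod_apply (e.measurable hmeas),
          ← lintegral_indicator measurableSet_Ioo]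
        exact lintegral_congr hslice
    _ = ((n + 1 : ℕ) : ℝ≥0∞)⁻¹ * volume (s ∩ simplex n) := by
        rw [lintegral_mul_const _ (by fun_prop), setLIntegral_Ioo_pow]

lemma measurePreserving_divLast (n : ℕ) :
    MeasurePreserving divLast (orderStatLaw (n + 1)) (orderStatLaw n) := by
  refine ⟨measurable_divLast, Measure.ext fun s hs => ?_⟩
  rw [Measure.map_apply measurable_divLast hs, orderStatLaw, orderStatLaw, Measure.smul_apply,
    Measure.smul_apply, Measure.restrict_apply (measurable_divLast hs), Measure.restrict_apply hs,
    volume_divLast_preimage_inter_simplex hs, smul_eq_mul, smul_eq_mul, ← mul_assoc,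
    Nat.factorial_succ, Nat.cast_mul, mul_comm ((n + 1 : ℕ) : ℝ≥0∞),
    ENNReal.mul_inv_cancel_right (by simp) (by simp)]

lemma identDistrib_ratio {i j : Fin n} (hij : i < j) :
    IdentDistrib (fun g => g i / g j) (fun g => g (i.castLT hij))
      (orderStatLaw n) (orderStatLaw j) := by
  induction n with
  | zero => exact i.elim0
  | succ n ih =>
    have hdiv {F : (Fin n → ℝ) → ℝ} (hF : Measurable F) :
        IdentDistrib (F ∘ divLast) F (orderStatLaw (n + 1)) (orderStatLaw n) :=
      ⟨(hF.comp measurable_divLast).aemeasurable, hF.aemeasurable, by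
        rw [← Measure.map_map hF measurable_divLast, (measurePreserving_divLast n).map_eq]⟩
    obtain ⟨i, rfl⟩ := Fin.exists_castSucc_eq.2 (hij.trans_le (Fin.le_last j)).ne
    induction j using Fin.lastCases with
    | last => exact hdiv (measurable_pi_apply i)
    | cast j =>
      refine .trans ?_ (ih hij)
      refine .trans (.of_ae_eq (by fun_prop) ?_)
        (hdiv ((measurable_pi_apply i).div (measurable_pi_apply j)))
      filter_upwards [ae_orderStatLaw_mem_simplex (n + 1)] with g hg
      exact (div_div_div_cancel_right₀ (hg.2 _).1.ne' _ _).symm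

/-- The linear combination of values of `f` at ratios of coordinates whose coefficients are those of
the elemental estimator, with `I = a + 1` and `J = m + 2`. -/
noncomputable def ratioContrast {E : Type*} [AddCommGroup E] [Module ℝ E] (f : ℝ → E) (a m : Fin n)
    (g : Fin (n + 1) → ℝ) : E :=
  ((m : ℝ) + 1) • f (g a.castSucc / g m.castSucc)
    - ((m : ℝ) - a) • f (g a.castSucc / g m.succ)
    - ((a : ℝ) + 1) • f (g a.succ / g m.succ)

section Contrast

variable {E : Type*} [NormedAddCommGroup E] [MeasurableSpace E] [BorelSpace E] {f : ℝ → E}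

lemma integrable_ratio_orderStatLaw (hf : Measurable f) (hint : IntegrableOn f (Ioo 0 1))
    {i j : Fin n} (hij : i < j) : Integrable (fun g => f (g i / g j)) (orderStatLaw n) :=
  ((identDistrib_ratio hij).comp hf).integrable_iff.2 (integrable_apply_orderStatLaw hint _)

variable [NormedSpace ℝ E]

lemma integral_ratio_orderStatLaw (hf : Measurable f) {i j : Fin n} (hij : i < j) :
    ∫ g, f (g i / g j) ∂orderStatLaw n = ∫ g, f (g (i.castLT hij)) ∂orderStatLaw j :=
  ((identDistrib_ratio hij).comp hf).integral_eq

variable {a m : Fin n}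

lemma integrable_ratioContrast (hf : Measurable f) (hint : IntegrableOn f (Ioo 0 1)) (ham : a < m) :
    Integrable (ratioContrast f a m) (orderStatLaw (n + 1)) :=
  (((integrable_ratio_orderStatLaw hf hint (Fin.castSucc_lt_castSucc_iff.2 ham)).smul _).sub
    ((integrable_ratio_orderStatLaw hf hint (Fin.castSucc_lt_succ_iff.2 ham.le)).smul _)).sub
    ((integrable_ratio_orderStatLaw hf hint (Fin.succ_lt_succ_iff.2 ham)).smul _)

lemma integral_ratioContrast_eq_zero (hf : Measurable f) (hint : IntegrableOn f (Ioo 0 1))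
    (ham : a < m) : ∫ g, ratioContrast f a m g ∂orderStatLaw (n + 1) = 0 := by
  have h₁ : a.castSucc < m.castSucc := Fin.castSucc_lt_castSucc_iff.2 ham
  have h₂ : a.castSucc < m.succ := Fin.castSucc_lt_succ_iff.2 ham.le
  have h₃ : a.succ < m.succ := Fin.succ_lt_succ_iff.2 ham
  have hi₁ := (integrable_ratio_orderStatLaw hf hint h₁).fun_smul ((m : ℝ) + 1)
  have hi₂ := (integrable_ratio_orderStatLaw hf hint h₂).fun_smul ((m : ℝ) - a)
  have hi₃ := (integrable_ratio_orderStatLaw hf hint h₃).fun_smul ((a : ℝ) + 1)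
  have hrec := integral_apply_orderStatLaw_recurrence
    (integrable_apply_orderStatLaw hint (a.castLT ham : Fin m))
  simp only [ratioContrast]
  rw [integral_sub ?_ hi₃, integral_sub hi₁ hi₂, integral_smul, integral_smul, integral_smul,
    integral_ratio_orderStatLaw hf h₁, integral_ratio_orderStatLaw hf h₂,
    integral_ratio_orderStatLaw hf h₃, sub_sub]
  · exact sub_eq_zero.2 hrec
  · exact hi₁.sub hi₂

end Contrast

lemma measurable_log_neg_log : Measurable fun v : ℝ => log (-log v) :=
  measurable_log.comp measurable_log.neg

lemma abs_log_neg_log_le {v : ℝ} (hv : v ∈ Ioo 0 1) : |log (-log v)| ≤ -log v - log (1 - v) := by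
  have hsub : 0 < 1 - v := sub_pos.2 hv.2
  have hle : 1 - v ≤ -log v := by linarith [log_le_sub_one_of_pos hv.1]
  have hupper : log (-log v) ≤ -log v - 1 := log_le_sub_one_of_pos (hsub.trans_le hle)
  have hlower : log (1 - v) ≤ log (-log v) := log_le_log hsub hle
  have hneg : log (1 - v) ≤ 0 := log_nonpos hsub.le (by linarith [hv.1])
  rw [abs_le]
  constructor <;> linarith

lemma integrableOn_log_neg_log : IntegrableOn (fun v : ℝ => log (-log v)) (Ioo 0 1) := by
  have hlog : IntervalIntegrable log volume 0 1 := intervalIntegral.intervalIntegrable_log'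
  have hlog_sub : IntervalIntegrable (fun v => log (1 - v)) volume 0 1 := by
    simpa using (hlog.comp_sub_left 1).symm
  have hbound : IntegrableOn (fun v => -log v - log (1 - v)) (Ioo 0 1) :=
    (intervalIntegrable_iff_integrableOn_Ioo_of_le zero_le_one).1 (hlog.neg.sub hlog_sub)
  refine hbound.mono' measurable_log_neg_log.aestronglyMeasurable ?_
  exact (ae_restrict_iff' measurableSet_Ioo).2 (ae_of_all _ fun v => abs_log_neg_log_le)

lemma log_exp_quantile_sub {x y μ σ : ℝ} (hσ : 0 < σ) (hx : 0 < x) (hxy : x < y) :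
    log ((μ - σ * log x) - (μ - σ * log y)) = log σ + log (-log (x / y)) := by
  have hlog : 0 < -log (x / y) := by
    have hy := hx.trans hxy
    exact neg_pos.2 (log_neg (div_pos hx hy) ((div_lt_one hy).2 hxy))
  rw [← log_mul hσ.ne' hlog.ne', log_div hx.ne' (hx.trans hxy).ne']
  ring_nf

lemma sample_succ (u : ℝ → ℝ) (g : Fin n → ℝ) (i : Fin n) : sample n u g (i + 1) = u (g i) :=
  dif_pos i.isLt

lemma elemental_exp_quantile_eq_ratioContrast {a m : Fin n} (ham : a < m) {μ σ : ℝ} (hσ : 0 < σ)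
    {g : Fin (n + 1) → ℝ} (hg : g ∈ simplex (n + 1)) :
    elemental (a + 1) (m + 2) (sample (n + 1) (fun t => μ - σ * log t) g) =
      ratioContrast (fun v => log (-log v)) a m g := by
  have hlog {i j : Fin (n + 1)} (hij : i < j) :
      log (sample (n + 1) (fun t => μ - σ * log t) g (i + 1) -
        sample (n + 1) (fun t => μ - σ * log t) g (j + 1)) = log σ + log (-log (g i / g j)) := by
    rw [sample_succ, sample_succ, log_exp_quantile_sub hσ (hg.2 i).1 (hg.1 hij)]
  have h₁ := hlog (Fin.castSucc_lt_castSucc_iff.2 ham)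
  have h₂ := hlog (Fin.castSucc_lt_succ_iff.2 ham.le)
  have h₃ := hlog (Fin.succ_lt_succ_iff.2 ham)
  simp only [Fin.val_castSucc, Fin.val_succ] at h₁ h₂ h₃
  simp only [elemental, ratioContrast, smul_eq_mul, Nat.cast_add]
  rw [show (m : ℕ) + 2 - 1 = m + 1 by lia, h₁, h₂, h₃]
  push_cast
  ring

/-- Each elemental estimator is unbiased at `ξ = 0`, where the GPD quantile function
is the exponential one `u_0(t) = μ - σ log t`. -/
theorem elemental_unbiased_xi_zero (n I J : ℕ) (hn : 3 ≤ n) (hI : 1 ≤ I)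
    (hIJ : I + 2 ≤ J) (hJn : J ≤ n) (μ σ : ℝ) (hσ : 0 < σ) :
    IntegrableOn
      (fun g => elemental I J (sample n (fun t => μ - σ * Real.log t) g)) (simplex n) volume ∧
    (n.factorial : ℝ) *
      ∫ g in simplex n, elemental I J (sample n (fun t => μ - σ * Real.log t) g) = 0 := by
  obtain ⟨N, rfl⟩ : ∃ N, n = N + 1 := ⟨n - 1, by lia⟩
  obtain ⟨a, rfl⟩ : ∃ a : Fin N, I = a + 1 := ⟨⟨I - 1, by lia⟩, by lia⟩
  obtain ⟨m, rfl⟩ : ∃ m : Fin N, J = m + 2 := ⟨⟨J - 2, by lia⟩, by lia⟩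
  have ham : a < m := Fin.lt_def.2 (by lia)
  have heq : (fun g => elemental (a + 1) (m + 2) (sample (N + 1) (fun t => μ - σ * log t) g))
      =ᵐ[orderStatLaw (N + 1)] ratioContrast (fun v => log (-log v)) a m := by
    filter_upwards [ae_orderStatLaw_mem_simplex (N + 1)] with g hg
    exact elemental_exp_quantile_eq_ratioContrast ham hσ hg
  constructor
  · rw [← integrable_orderStatLaw_iff, integrable_congr heq]
    exact integrable_ratioContrast measurable_log_neg_log integrableOn_log_neg_log ham
  · rw [← smul_eq_mul, ← integral_orderStatLaw, integral_congr_ae heq]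
    exact integral_ratioContrast_eq_zero measurable_log_neg_log integrableOn_log_neg_log ham
end

section
/- Fix m ∈ ℕ. If real numbers b_0, …, b_m and c satisfy ∑_{k=0}^{m} b_k · ∫₀¹ φ^k·log(1−φ^γ) dφ = c·γ for every γ > 0, then c = 0 and b_0 = b_1 = ⋯ = b_m = 0. -/
open MeasureTheory Real Set

/-!
Expanding the logarithm gives, with `x k = p k + 1` and `R X = ∑ k, b k / (X + x k)`,
`∑ k, b k * g_{p k} γ = -∑ n ≥ 1, R (n * γ) / n`.
The coefficients of the expansion of `R` at infinity are the power sums `∑ k, b k * (-x k) ^ j`; if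
they vanish below `j`, then `γ ^ (j + 1)` times the left-hand side tends to `-ζ(j + 2)` times the
`j`-th one. For `j = 0` this rules out linear growth, so `c = 0`; then all power sums vanish
inductively, and the `x k` being distinct, so do all `b k`.
-/

open Filter Topology

section PowerSums

variable {ι K : Type*} {s : Finset ι}

theorem eq_zero_of_forall_sum_mul_pow_eq_zero {R : Type*} [CommRing R] [IsDomain R]
    {b x : ι → R} (hx : InjOn x s) (h : ∀ j : ℕ, ∑ k ∈ s, b k * x k ^ j = 0) :
    ∀ k ∈ s, b k = 0 := by
  -- Dedekind: the distinct characters `j ↦ x k ^ j` of the monoid `ℕ` are linearly independent.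
  have indep : LinearIndepOn R (fun k ↦ (powersHom R (x k) : Multiplicative ℕ → R)) s :=
    (linearIndependent_monoidHom (Multiplicative ℕ) R).comp (fun k : s ↦ powersHom R (x k))
      ((powersHom R).injective.comp hx.injective)
  refine linearIndepOn_finset_iff.mp indep b (funext fun j ↦ ?_)
  simpa using h j.toAdd

theorem pow_mul_sum_div_add_of_sum_mul_pow_eq_zero [Field K] {b x : ι → K} {X : K}
    (hX : ∀ k ∈ s, X + x k ≠ 0) {j : ℕ} (h : ∀ i < j, ∑ k ∈ s, b k * (-x k) ^ i = 0) :
    X ^ j * ∑ k ∈ s, b k / (X + x k) = ∑ k ∈ s, b k * (-x k) ^ j / (X + x k) := by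
  induction j with
  | zero => simp
  | succ j ih =>
    calc X ^ (j + 1) * ∑ k ∈ s, b k / (X + x k)
        = X * ∑ k ∈ s, b k * (-x k) ^ j / (X + x k) - ∑ k ∈ s, b k * (-x k) ^ j := by
          rw [h j j.lt_succ_self, sub_zero, pow_succ', mul_assoc,
            ih fun i hi ↦ h i (hi.trans j.lt_succ_self)]
      _ = ∑ k ∈ s, b k * (-x k) ^ (j + 1) / (X + x k) := by
          rw [Finset.mul_sum, ← Finset.sum_sub_distrib]
          refine Finset.sum_congr rfl fun k hk ↦ ?_
          have := hX k hk
          field_simp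
          ring

end PowerSums

section Asymptotics

variable {ι : Type*}

theorem tendsto_div_add_const_atTop (x : ℝ) : Tendsto (fun X : ℝ ↦ X / (X + x)) atTop (𝓝 1) := by
  have hinv : Tendsto (fun X : ℝ ↦ (1 + x * X⁻¹)⁻¹) atTop (𝓝 1) := by
    simpa using ((tendsto_inv_atTop_zero.const_mul x).const_add 1).inv₀ (by simp)
  refine hinv.congr' ?_
  filter_upwards [eventually_ne_atTop 0] with X hX
  rw [← div_eq_mul_inv, one_add_div hX, inv_div]

theorem tendsto_pow_mul_sum_div_add_atTop {s : Finset ι} {b x : ι → ℝ} {j : ℕ}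
    (h : ∀ i < j, ∑ k ∈ s, b k * (-x k) ^ i = 0) :
    Tendsto (fun X : ℝ ↦ X ^ (j + 1) * ∑ k ∈ s, b k / (X + x k)) atTop
      (𝓝 (∑ k ∈ s, b k * (-x k) ^ j)) := by
  have hlim : Tendsto (fun X : ℝ ↦ ∑ k ∈ s, b k * (-x k) ^ j * (X / (X + x k))) atTop
      (𝓝 (∑ k ∈ s, b k * (-x k) ^ j)) := by
    simpa using tendsto_finsetSum s fun k _ ↦
      (tendsto_div_add_const_atTop (x k)).const_mul (b k * (-x k) ^ j)
  have hne : ∀ᶠ X : ℝ in atTop, ∀ k ∈ s, X + x k ≠ 0 :=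
    (Finset.eventually_all s).mpr fun k _ ↦
      (tendsto_atTop_add_const_right atTop (x k) tendsto_id).eventually_ne_atTop 0
  refine hlim.congr' ?_
  filter_upwards [hne] with X hX
  rw [pow_succ', mul_assoc, pow_mul_sum_div_add_of_sum_mul_pow_eq_zero hX h, Finset.mul_sum]
  exact Finset.sum_congr rfl fun k _ ↦ by ring

theorem tendsto_tsum_smul_comp_mul_atTop {E : Type*} [NormedAddCommGroup E] [NormedSpace ℝ E]
    [CompleteSpace E] {a u : ι → ℝ} (ha : Summable a) (hu : ∀ i, 1 ≤ u i) {G : ℝ → E} {L : E}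
    (hG : Tendsto G atTop (𝓝 L)) :
    Tendsto (fun γ ↦ ∑' i, a i • G (u i * γ)) atTop (𝓝 ((∑' i, a i) • L)) := by
  obtain ⟨T, hT⟩ : ∃ T, ∀ X ≥ T, ‖G X‖ ≤ ‖L‖ + 1 :=
    eventually_atTop.mp (hG.norm.eventually_le_const (lt_add_one ‖L‖))
  rw [← ha.tsum_smul_const]
  refine tendsto_tsum_of_dominated_convergence (ha.abs.mul_right (‖L‖ + 1)) (fun i ↦ ?_) ?_
  · have hui : Tendsto (fun γ ↦ u i * γ) atTop atTop :=
      tendsto_id.const_mul_atTop (zero_lt_one.trans_le (hu i))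
    exact (hG.comp hui).const_smul (a i)
  · filter_upwards [eventually_ge_atTop T, eventually_ge_atTop 0] with γ hγT hγ i
    rw [norm_smul, Real.norm_eq_abs]
    gcongr
    exact hT _ (hγT.trans (le_mul_of_one_le_left hγ (hu i)))

end Asymptotics

theorem summable_inv_natCast_add_one_pow {r : ℕ} (hr : 1 < r) :
    Summable fun n : ℕ ↦ (((n : ℝ) + 1) ^ r)⁻¹ := by
  simpa using (summable_nat_add_iff 1).mpr (Real.summable_nat_pow_inv.mpr hr)

/-- The integral `g_s(γ) = ∫₀¹ φ^s log(1 − φ^γ) dφ` of the paper, with a real exponent `s`. It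
converges for `-1 < s` and `0 < γ`. -/
noncomputable def logMoment (s γ : ℝ) : ℝ :=
  ∫ φ in Ioo (0 : ℝ) 1, φ ^ s * log (1 - φ ^ γ)

section LogMoment

theorem integral_Ioo_zero_one_rpow {r : ℝ} (hr : -1 < r) :
    ∫ φ in Ioo (0 : ℝ) 1, φ ^ r = (r + 1)⁻¹ := by
  rw [← integral_Ioc_eq_integral_Ioo, ← intervalIntegral.integral_of_le zero_le_one,
    integral_rpow (.inl hr), one_rpow, zero_rpow (by linarith), sub_zero, one_div]

theorem hasSum_rpow_mul_log_one_sub_rpow {φ : ℝ} (hφ : φ ∈ Ioo (0 : ℝ) 1) (s : ℝ) {γ : ℝ}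
    (hγ : 0 < γ) :
    HasSum (fun n : ℕ ↦ ((n : ℝ) + 1)⁻¹ * φ ^ (((n : ℝ) + 1) * γ + s))
      (-(φ ^ s * log (1 - φ ^ γ))) := by
  have habs : |φ ^ γ| < 1 := by
    rw [abs_of_nonneg (rpow_nonneg hφ.1.le γ)]
    exact rpow_lt_one hφ.1.le hφ.2 hγ
  rw [← mul_neg]
  refine ((hasSum_pow_div_log_of_abs_lt_one habs).mul_left (φ ^ s)).congr_fun fun n ↦ ?_
  rw [rpow_add hφ.1, mul_comm _ γ, ← Nat.cast_add_one, rpow_mul_natCast hφ.1.le]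
  ring

theorem summable_inv_mul_inv_mul_add {x γ : ℝ} (hx : 0 ≤ x) (hγ : 0 < γ) :
    Summable fun n : ℕ ↦ ((n : ℝ) + 1)⁻¹ * (((n : ℝ) + 1) * γ + x)⁻¹ := by
  refine .of_nonneg_of_le (fun n ↦ by positivity) (fun n ↦ ?_)
    ((summable_inv_natCast_add_one_pow one_lt_two).mul_right γ⁻¹)
  calc ((n : ℝ) + 1)⁻¹ * (((n : ℝ) + 1) * γ + x)⁻¹
      ≤ ((n : ℝ) + 1)⁻¹ * (((n : ℝ) + 1) * γ)⁻¹ := by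
        gcongr
        exact le_add_of_nonneg_right hx
    _ = (((n : ℝ) + 1) ^ 2)⁻¹ * γ⁻¹ := by rw [mul_inv, sq, mul_inv, mul_assoc]

theorem hasSum_logMoment {s γ : ℝ} (hs : -1 < s) (hγ : 0 < γ) :
    HasSum (fun n : ℕ ↦ ((n : ℝ) + 1)⁻¹ * (((n : ℝ) + 1) * γ + (s + 1))⁻¹)
      (-logMoment s γ) := by
  set F : ℕ → ℝ → ℝ := fun n φ ↦ ((n : ℝ) + 1)⁻¹ * φ ^ (((n : ℝ) + 1) * γ + s)
  have hexp (n : ℕ) : -1 < ((n : ℝ) + 1) * γ + s :=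
    hs.trans (lt_add_of_pos_left s (by positivity))
  have hint (n : ℕ) : IntegrableOn (F n) (Ioo 0 1) :=
    ((intervalIntegral.integrableOn_Ioo_rpow_iff one_pos).mpr (hexp n)).const_mul _
  have hval (n : ℕ) : ∫ φ in Ioo (0 : ℝ) 1, F n φ
      = ((n : ℝ) + 1)⁻¹ * (((n : ℝ) + 1) * γ + (s + 1))⁻¹ := by
    rw [integral_const_mul, integral_Ioo_zero_one_rpow (hexp n), add_assoc]
  have hnorm (n : ℕ) : ∫ φ in Ioo (0 : ℝ) 1, ‖F n φ‖ = ∫ φ in Ioo (0 : ℝ) 1, F n φ :=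
    setIntegral_congr_fun measurableSet_Ioo fun φ hφ ↦
      norm_of_nonneg (mul_nonneg (by positivity) (rpow_nonneg hφ.1.le _))
  have hlim : ∫ φ in Ioo (0 : ℝ) 1, ∑' n, F n φ = -logMoment s γ := by
    rw [logMoment, ← integral_neg]
    exact setIntegral_congr_fun measurableSet_Ioo fun φ hφ ↦
      (hasSum_rpow_mul_log_one_sub_rpow hφ s hγ).tsum_eq
  have hsum := hasSum_integral_of_summable_integral_norm hint <| by
    simpa only [hnorm, hval] using summable_inv_mul_inv_mul_add (neg_le_iff_add_nonneg.mp hs.le) hγ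
  simpa only [hval, hlim] using hsum

variable {ι : Type*} {t : Finset ι} {b p : ι → ℝ}

variable (b) in
theorem pow_mul_sum_logMoment (hp : ∀ k ∈ t, -1 < p k) {γ : ℝ} (hγ : 0 < γ) (j : ℕ) :
    γ ^ (j + 1) * ∑ k ∈ t, b k * logMoment (p k) γ =
      -∑' n : ℕ, (((n : ℝ) + 1) ^ (j + 2))⁻¹ * ((((n : ℝ) + 1) * γ) ^ (j + 1) *
        ∑ k ∈ t, b k / (((n : ℝ) + 1) * γ + (p k + 1))) := by
  have hsum := (hasSum_sum fun k hk ↦ (hasSum_logMoment (hp k hk) hγ).mul_left (b k)).mul_left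
    (γ ^ (j + 1))
  have hterm (n : ℕ) : (((n : ℝ) + 1) ^ (j + 2))⁻¹ * ((((n : ℝ) + 1) * γ) ^ (j + 1) *
        ∑ k ∈ t, b k / (((n : ℝ) + 1) * γ + (p k + 1))) =
      γ ^ (j + 1) * ∑ k ∈ t,
        b k * (((n : ℝ) + 1)⁻¹ * (((n : ℝ) + 1) * γ + (p k + 1))⁻¹) := by
    simp only [div_eq_mul_inv, mul_left_comm (b _), ← Finset.mul_sum, mul_pow]
    field_simp
    ring
  simp only [hterm, hsum.tsum_eq, mul_neg, Finset.sum_neg_distrib, neg_neg]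

theorem tendsto_pow_mul_sum_logMoment (hp : ∀ k ∈ t, -1 < p k) {j : ℕ}
    (h : ∀ i < j, ∑ k ∈ t, b k * (-(p k + 1)) ^ i = 0) :
    Tendsto (fun γ ↦ γ ^ (j + 1) * ∑ k ∈ t, b k * logMoment (p k) γ) atTop
      (𝓝 (-((∑' n : ℕ, (((n : ℝ) + 1) ^ (j + 2))⁻¹) * ∑ k ∈ t, b k * (-(p k + 1)) ^ j))) := by
  have hlim := tendsto_tsum_smul_comp_mul_atTop
    (summable_inv_natCast_add_one_pow (r := j + 2) (by lia))
    (u := fun n : ℕ ↦ (n : ℝ) + 1) (by simp) (tendsto_pow_mul_sum_div_add_atTop h)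
  refine hlim.neg.congr' ?_
  filter_upwards [eventually_gt_atTop 0] with γ hγ
  exact (pow_mul_sum_logMoment b hp hγ j).symm

variable (b) in
theorem tendsto_sum_logMoment_div_atTop (hp : ∀ k ∈ t, -1 < p k) :
    Tendsto (fun γ ↦ (∑ k ∈ t, b k * logMoment (p k) γ) / γ) atTop (𝓝 0) := by
  have hlim := (tendsto_pow_mul_sum_logMoment (b := b) hp (j := 0) (by simp)).mul
    ((tendsto_inv_atTop_zero (𝕜 := ℝ)).pow 2)
  rw [zero_pow two_ne_zero, mul_zero] at hlim
  refine hlim.congr' ?_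
  filter_upwards [eventually_ne_atTop 0] with γ hγ
  field_simp
  ring

theorem sum_mul_pow_eq_zero_of_frequently_sum_logMoment_eq_zero (hp : ∀ k ∈ t, -1 < p k)
    (h : ∃ᶠ γ in atTop, ∑ k ∈ t, b k * logMoment (p k) γ = 0) (j : ℕ) :
    ∑ k ∈ t, b k * (-(p k + 1)) ^ j = 0 := by
  induction j using Nat.strong_induction_on with
  | _ j ih =>
    have hzeta : 0 < ∑' n : ℕ, (((n : ℝ) + 1) ^ (j + 2))⁻¹ :=
      (summable_inv_natCast_add_one_pow (by lia)).tsum_pos (fun n ↦ by positivity) 0 (by simp)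
    have hlim := tendsto_nhds_unique_of_frequently_eq (tendsto_pow_mul_sum_logMoment hp ih)
      tendsto_const_nhds (h.mono fun γ hγ ↦ by rw [hγ, mul_zero])
    exact (mul_eq_zero.mp (neg_eq_zero.mp hlim)).resolve_left hzeta.ne'

end LogMoment

theorem gk_affine_independence_general {ι : Type*} {t : Finset ι} {b p : ι → ℝ} {c : ℝ}
    (hp : ∀ k ∈ t, -1 < p k) (hinj : InjOn p t)
    (h : ∃ᶠ γ in atTop, ∑ k ∈ t, b k * logMoment (p k) γ = c * γ) :
    c = 0 ∧ ∀ k ∈ t, b k = 0 := by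
  have hc : c = 0 := by
    refine (tendsto_nhds_unique_of_frequently_eq (tendsto_sum_logMoment_div_atTop b hp)
      (tendsto_const_nhds (x := c)) ?_).symm
    refine (h.and_eventually (eventually_ne_atTop 0)).mono ?_
    rintro γ ⟨heq, hγ⟩
    rw [heq, mul_div_cancel_right₀ c hγ]
  refine ⟨hc, eq_zero_of_forall_sum_mul_pow_eq_zero (x := fun k ↦ -(p k + 1)) ?_
    (sum_mul_pow_eq_zero_of_frequently_sum_logMoment_eq_zero hp ?_)⟩
  · exact (neg_injective.comp (add_left_injective 1)).comp_injOn hinj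
  · simpa only [hc, zero_mul] using h

/-- If `∑_{k=0}^m b_k ∫₀¹ φ^k log(1−φ^γ) dφ = c·γ` for every `γ > 0`, then `c = 0`
and `b_0 = ⋯ = b_m = 0`. -/
theorem gk_affine_independence (m : ℕ) (b : ℕ → ℝ) (c : ℝ)
    (h : ∀ γ : ℝ, 0 < γ →
      ∑ k ∈ Finset.range (m + 1),
        b k * ∫ φ in Set.Ioo (0 : ℝ) 1, φ ^ k * Real.log (1 - φ ^ γ) = c * γ) :
    c = 0 ∧ ∀ k ≤ m, b k = 0 := by
  have hfreq : ∃ᶠ γ in atTop,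
      ∑ k ∈ Finset.range (m + 1), b k * logMoment k γ = c * γ := by
    simpa only [logMoment, rpow_natCast] using ((eventually_gt_atTop 0).mono h).frequently
  simpa only [Finset.mem_range_succ_iff] using gk_affine_independence_general
    (fun k _ ↦ neg_one_lt_zero.trans_le k.cast_nonneg) Nat.cast_injective.injOn hfreq
end
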